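/- arXiv:1703.10681 — 7 statements merged into one kernel-verified Lean document; each statement's English description precedes it below -/
import Mathlib

section
/- For every fixed γ ∈ (0,1] and budget B > 0, the allocation rule b ↦ Greedy-TM(γ, b) is monotone: for every bid vector b with positive entries, every agent i ∈ Greedy-TM(γ, b), and every 0 < β ≤ b_i, one has i ∈ Greedy-TM(γ, (β, b_{−i})). -/
open Classical

/-- Marginal value `m_i(S) = v(S ∪ {i}) - v(S)`. -/
noncomputable def marg {ι : Type*} [DecidableEq ι] (v : Finset ι → ℝ) (S : Finset ι) (i : ι) : ℝ :=
  v (insert i S) - v S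

/-- The next agent in the greedy order once the set `S` has been selected:
an agent of `Sᶜ` maximizing marginal value over bid, ties broken by the fixed linear order. -/
noncomputable def pick {ι : Type*} [Fintype ι] [LinearOrder ι] [Nonempty ι]
    (v : Finset ι → ℝ) (b : ι → ℝ) (S : Finset ι) : ι :=
  if h : Sᶜ.Nonempty then
    (Sᶜ.filter fun j => ∀ j' ∈ Sᶜ, marg v S j' / b j' ≤ marg v S j / b j).min'
      (by
        obtain ⟨j, hj, hmax⟩ := Finset.exists_max_image Sᶜ (fun j => marg v S j / b j) h
        exact ⟨j, Finset.mem_filter.mpr ⟨hj, hmax⟩⟩)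
  else Classical.arbitrary ι

/-- `greedySet v b t` is the set `S_t` of the first `t` agents in the greedy order
computed with respect to the bid vector `b`. -/
noncomputable def greedySet {ι : Type*} [Fintype ι] [LinearOrder ι] [Nonempty ι]
    (v : Finset ι → ℝ) (b : ι → ℝ) : ℕ → Finset ι
  | 0 => ∅
  | t + 1 => insert (pick v b (greedySet v b t)) (greedySet v b t)

/-- `agent v b k` is the `k`-th agent `a_k` in the greedy order (1-indexed). -/
noncomputable def agent {ι : Type*} [Fintype ι] [LinearOrder ι] [Nonempty ι]
    (v : Finset ι → ℝ) (b : ι → ℝ) (k : ℕ) : ι :=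
  pick v b (greedySet v b (k - 1))

/-- `optVal v b B A'` is the maximum of `v S` over `S ⊆ A'` with `∑_{i ∈ S} b i ≤ B`. -/
noncomputable def optVal {ι : Type*} (v : Finset ι → ℝ) (b : ι → ℝ) (B : ℝ)
    (A' : Finset ι) : ℝ :=
  sSup (v '' {S : Finset ι | S ⊆ A' ∧ ∑ i ∈ S, b i ≤ B})

/-- The greedy threshold mechanism `Greedy-TM(γ, b)`: it outputs `S_{k-1}` where `k` is the
least index with `b_{a_k} · v(S_k) > γ · B · m_{a_k}(S_{k-1})`, and all of `A` if no such `k`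
exists. -/
noncomputable def greedyTM {ι : Type*} [Fintype ι] [LinearOrder ι] [Nonempty ι]
    (v : Finset ι → ℝ) (B γ : ℝ) (b : ι → ℝ) : Finset ι :=
  if h : ∃ k, (1 ≤ k ∧ k ≤ Fintype.card ι) ∧
      b (agent v b k) * v (greedySet v b k) >
        γ * B * marg v (greedySet v b (k - 1)) (agent v b k)
  then greedySet v b (Nat.find h - 1)
  else Finset.univ

/-- The exponential-time greedy oracle mechanism `Greedy-EOM(α, b)`: it outputs `S_{k-1}` where
`k` is the least index with `v(S_k) > α · opt_b(A, B)`, and all of `A` if no such `k` exists. -/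
noncomputable def greedyEOM {ι : Type*} [Fintype ι] [LinearOrder ι] [Nonempty ι]
    (v : Finset ι → ℝ) (B α : ℝ) (b : ι → ℝ) : Finset ι :=
  if h : ∃ k, (1 ≤ k ∧ k ≤ Fintype.card ι) ∧
      v (greedySet v b k) > α * optVal v b B Finset.univ
  then greedySet v b (Nat.find h - 1)
  else Finset.univ

/-- The greedy oracle mechanism `Greedy-OM(α, b)` with oracle `O`: it outputs
`{ a_t : 1 ≤ t ≤ n, v(S_t) ≤ α · O(b, A \ {a_t}) }`. -/
noncomputable def greedyOM {ι : Type*} [Fintype ι] [LinearOrder ι] [Nonempty ι]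
    (v : Finset ι → ℝ) (O : (ι → ℝ) → Finset ι → ℝ) (α : ℝ) (b : ι → ℝ) : Finset ι :=
  ((Finset.Icc 1 (Fintype.card ι)).filter
      (fun t => v (greedySet v b t) ≤ α * O b (Finset.univ.erase (agent v b t)))).image
    (fun t => agent v b t)

/-- An allocation rule `f`, mapping bid vectors with positive entries to subsets of the agents,
is monotone if a winner remains a winner after lowering his bid. -/
def MonotoneAlloc {ι : Type*} [DecidableEq ι] (f : (ι → ℝ) → Finset ι) : Prop :=
  ∀ b : ι → ℝ, (∀ j, 0 < b j) → ∀ i ∈ f b, ∀ β : ℝ, 0 < β → β ≤ b i →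
    i ∈ f (Function.update b i β)

theorem pick_spec {ι : Type*} [Fintype ι] [LinearOrder ι] [Nonempty ι]
    (v : Finset ι → ℝ) (b : ι → ℝ) (S : Finset ι) (h : Sᶜ.Nonempty) :
    pick v b S ∈ Sᶜ ∧ (∀ j' ∈ Sᶜ, marg v S j' / b j' ≤ marg v S (pick v b S) / b (pick v b S)) ∧
    (∀ j ∈ Sᶜ, (∀ j' ∈ Sᶜ, marg v S j' / b j' ≤ marg v S j / b j) → pick v b S ≤ j) := by
  have hp : pick v b S ∈
      (Sᶜ.filter fun j => ∀ j' ∈ Sᶜ, marg v S j' / b j' ≤ marg v S j / b j) := by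
    unfold pick
    rw [dif_pos h]
    exact Finset.min'_mem _ _
  rw [Finset.mem_filter] at hp
  refine ⟨hp.1, hp.2, fun j hj hm => ?_⟩
  unfold pick
  rw [dif_pos h]
  exact Finset.min'_le _ _ (Finset.mem_filter.mpr ⟨hj, hm⟩)

theorem marg_nonneg {ι : Type*} [DecidableEq ι] (v : Finset ι → ℝ)
    (hvmono : ∀ S T : Finset ι, S ⊆ T → v S ≤ v T) (S : Finset ι) (i : ι) :
    0 ≤ marg v S i :=
  sub_nonneg.mpr (hvmono _ _ (Finset.subset_insert i S))

theorem pick_update {ι : Type*} [Fintype ι] [LinearOrder ι] [Nonempty ι]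
    (v : Finset ι → ℝ) (hvmono : ∀ S T : Finset ι, S ⊆ T → v S ≤ v T)
    (b : ι → ℝ) (i : ι) (β : ℝ) (hβ : 0 < β) (hβb : β ≤ b i) (S : Finset ι)
    (hne : pick v (Function.update b i β) S ≠ i) :
    pick v (Function.update b i β) S = pick v b S := by
  by_cases h : Sᶜ.Nonempty
  swap
  · unfold pick
    rw [dif_neg h, dif_neg h]
  obtain ⟨p1, p2, p3⟩ := pick_spec v b S h
  obtain ⟨q1, q2, q3⟩ := pick_spec v (Function.update b i β) S h
  have hle : ∀ j, marg v S j / b j ≤ marg v S j / Function.update b i β j := by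
    intro j
    by_cases hj : j = i
    · subst hj
      rw [Function.update_self]
      exact div_le_div_of_nonneg_left (marg_nonneg v hvmono S j) hβ hβb
    · rw [Function.update_of_ne hj]
  have hq : Function.update b i β (pick v (Function.update b i β) S)
      = b (pick v (Function.update b i β) S) := Function.update_of_ne hne _ _
  generalize pick v (Function.update b i β) S = q at *
  generalize pick v b S = p at *
  apply le_antisymm
  · apply q3 p p1
    intro j' hj'
    refine (q2 j' hj').trans ?_
    rw [hq]
    exact (p2 q q1).trans (hle p)
  · apply p3 q q1
    intro j' hj'
    rw [← hq]
    exact (hle j').trans (q2 j' hj')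

theorem greedySet_mono {ι : Type*} [Fintype ι] [LinearOrder ι] [Nonempty ι]
    (v : Finset ι → ℝ) (b : ι → ℝ) : Monotone (greedySet v b) :=
  monotone_nat_of_le_succ fun _ => Finset.subset_insert _ _

theorem mem_greedySet {ι : Type*} [Fintype ι] [LinearOrder ι] [Nonempty ι]
    (v : Finset ι → ℝ) (b : ι → ℝ) (i : ι) (n : ℕ) (h : i ∈ greedySet v b n) :
    ∃ t < n, pick v b (greedySet v b t) = i := by
  induction n with
  | zero => simp [greedySet] at h
  | succ n ih =>
    rw [greedySet, Finset.mem_insert] at h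
    rcases h with h | h
    · exact ⟨n, by omega, h.symm⟩
    · obtain ⟨t, ht, h⟩ := ih h
      exact ⟨t, by omega, h⟩

theorem greedySet_card {ι : Type*} [Fintype ι] [LinearOrder ι] [Nonempty ι]
    (v : Finset ι → ℝ) (b : ι → ℝ) (n : ℕ) :
    n ≤ (greedySet v b n).card ∨ greedySet v b n = Finset.univ := by
  induction n with
  | zero => simp
  | succ n ih =>
    by_cases h : (greedySet v b n)ᶜ.Nonempty
    · left
      have h1 := (pick_spec v b _ h).1
      rw [Finset.mem_compl] at h1
      rw [greedySet, Finset.card_insert_of_notMem h1]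
      rcases ih with ih | ih
      · omega
      · simp [ih] at h1
    · right
      rw [Finset.not_nonempty_iff_eq_empty, Finset.compl_eq_empty_iff] at h
      rw [greedySet, h]
      simp

theorem greedySet_univ {ι : Type*} [Fintype ι] [LinearOrder ι] [Nonempty ι]
    (v : Finset ι → ℝ) (b : ι → ℝ) : greedySet v b (Fintype.card ι) = Finset.univ := by
  rcases greedySet_card v b (Fintype.card ι) with h | h
  · exact (Finset.card_eq_iff_eq_univ _).mp (le_antisymm (Finset.card_le_univ _) h)
  · exact h

theorem mem_greedyTM {ι : Type*} [Fintype ι] [LinearOrder ι] [Nonempty ι]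
    (v : Finset ι → ℝ) (B γ : ℝ) (b : ι → ℝ) (i : ι) :
    i ∈ greedyTM v B γ b ↔ ∃ t < Fintype.card ι, pick v b (greedySet v b t) = i ∧
      ∀ s ≤ t, b (pick v b (greedySet v b s)) * v (greedySet v b (s + 1)) ≤
        γ * B * marg v (greedySet v b s) (pick v b (greedySet v b s)) := by
  unfold greedyTM
  constructor
  · intro hi
    split_ifs at hi with h
    · obtain ⟨t, ht, hp⟩ := mem_greedySet v b i _ hi
      have hf := (Nat.find_spec h).1
      refine ⟨t, by omega, hp, fun s hs => ?_⟩
      have hm := Nat.find_min h (m := s + 1) (by omega)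
      by_contra hc
      exact hm ⟨⟨by omega, by omega⟩, not_le.mp hc⟩
    · rw [← greedySet_univ v b] at hi
      obtain ⟨t, ht, hp⟩ := mem_greedySet v b i _ hi
      refine ⟨t, ht, hp, fun s hs => ?_⟩
      by_contra hc
      exact h ⟨s + 1, ⟨by omega, by omega⟩, not_le.mp hc⟩
  · rintro ⟨t, ht, hp, hg⟩
    split_ifs with h
    · have hf := Nat.find_spec h
      generalize Nat.find h = k at *
      obtain ⟨⟨h1, h2⟩, h3⟩ := hf
      obtain ⟨s, rfl⟩ : ∃ s, k = s + 1 := ⟨k - 1, by omega⟩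
      have hts : t < s := by
        by_contra hc
        exact absurd (hg s (by omega)) (not_le.mpr h3)
      refine greedySet_mono v b (show t + 1 ≤ s + 1 - 1 by omega) ?_
      rw [greedySet, hp]
      exact Finset.mem_insert_self _ _
    · exact Finset.mem_univ _

theorem marg_anti {ι : Type*} [DecidableEq ι] (v : Finset ι → ℝ)
    (hvmono : ∀ S T : Finset ι, S ⊆ T → v S ≤ v T)
    (hvsub : ∀ S T : Finset ι, v (S ∪ T) + v (S ∩ T) ≤ v S + v T)
    (S T : Finset ι) (hST : S ⊆ T) (i : ι) : marg v T i ≤ marg v S i := by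
  by_cases hi : i ∈ T
  · have : marg v T i = 0 := by simp [marg, hi]
    rw [this]
    exact marg_nonneg v hvmono S i
  · have h := hvsub (insert i S) T
    have h1 : insert i S ∪ T = insert i T := by
      rw [Finset.insert_union, Finset.union_eq_right.mpr hST]
    have h2 : insert i S ∩ T = S := by
      rw [Finset.insert_inter_of_notMem hi, Finset.inter_eq_left.mpr hST]
    rw [h1, h2] at h
    unfold marg
    linarith

/-- For every fixed `γ ∈ (0,1]` and budget `B > 0`, the allocation rule
`b ↦ Greedy-TM(γ, b)` is monotone. -/
theorem greedyTM_monotone {ι : Type*} [Fintype ι] [LinearOrder ι] [Nonempty ι]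
    (v : Finset ι → ℝ) (hv0 : v (∅ : Finset ι) = 0)
    (hvmono : ∀ S T : Finset ι, S ⊆ T → v S ≤ v T)
    (hvsub : ∀ S T : Finset ι, v (S ∪ T) + v (S ∩ T) ≤ v S + v T)
    (B : ℝ) (hB : 0 < B) (γ : ℝ) (hγ0 : 0 < γ) (hγ1 : γ ≤ 1) :
    MonotoneAlloc (fun b => greedyTM v B γ b) := by
  intro b hb i hi β hβ hβb
  simp only [mem_greedyTM] at hi ⊢
  obtain ⟨t, ht, hp, hg⟩ := hi
  have hex : ∃ r, pick v (Function.update b i β) (greedySet v b r) = i := by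
    refine ⟨t, ?_⟩
    by_contra hc
    exact hc ((pick_update v hvmono b i β hβ hβb _ hc).trans hp)
  obtain ⟨r, hr, hmin⟩ : ∃ r, pick v (Function.update b i β) (greedySet v b r) = i ∧
      ∀ q < r, pick v (Function.update b i β) (greedySet v b q) ≠ i :=
    ⟨Nat.find hex, Nat.find_spec hex, fun q hq => Nat.find_min hex hq⟩
  have hrt : r ≤ t := by
    by_contra hc
    have h := hmin t (by omega)
    exact h ((pick_update v hvmono b i β hβ hβb _ h).trans hp)
  have hs : ∀ q ≤ r, greedySet v (Function.update b i β) q = greedySet v b q := by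
    intro q
    induction q with
    | zero => intro _; rfl
    | succ q ih =>
      intro hq
      rw [greedySet, greedySet, ih (by omega),
        pick_update v hvmono b i β hβ hβb _ (hmin q (by omega))]
  refine ⟨r, by omega, by rw [hs r le_rfl, hr], fun s hsr => ?_⟩
  rcases Nat.lt_or_ge s r with h | h
  · have h1 := hmin s h
    have h2 := pick_update v hvmono b i β hβ hβb _ h1
    rw [hs s hsr, hs (s + 1) h, Function.update_of_ne h1, h2]
    exact hg s (by omega)
  · obtain rfl : s = r := by omega
    rw [greedySet, hs s le_rfl, hr, Function.update_self]
    have h1 := hg t le_rfl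
    rw [hp] at h1
    have h2 := marg_anti v hvmono hvsub _ _ (greedySet_mono v b hrt) i
    have h3 : v (insert i (greedySet v b s)) ≤ v (greedySet v b (t + 1)) := by
      apply hvmono
      rw [greedySet, hp]
      exact Finset.insert_subset_insert _ (greedySet_mono v b hrt)
    have h4 : 0 ≤ v (insert i (greedySet v b s)) := by
      rw [← hv0]
      exact hvmono _ _ (Finset.empty_subset _)
    calc β * v (insert i (greedySet v b s))
        ≤ b i * v (greedySet v b (t + 1)) := mul_le_mul hβb h3 h4 (hb i).le
      _ ≤ γ * B * marg v (greedySet v b t) i := h1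
      _ ≤ γ * B * marg v (greedySet v b s) i :=
        mul_le_mul_of_nonneg_left h2 (mul_pos hγ0 hB).le
end

section
/- Fix γ ∈ (0,1]. Compute the greedy order a_1, …, a_n with respect to the true costs c, and suppose k ∈ {1, …, n} satisfies c_{a_k} · v(S_k) > γ · B · m_{a_k}(S_{k−1}). Then (1 + 2/γ) · [ ((γ+1)/(γ+2)) · v(S_{k−1}) + (1/(γ+2)) · v({i*}) ] ≥ opt(A, B). (This quantity in brackets is the expected value obtained by the mechanism Random-TM(γ), which outputs Greedy-TM(γ, c) = S_{k−1} with probability (γ+1)/(γ+2) and outputs {i*} with probability 1/(γ+2); hence Random-TM(γ) is a (1 + 2/γ)-approximation of the optimum.) -/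
open Classical

theorem aux_marg_sum {ι : Type*} [Fintype ι] [LinearOrder ι]
    (v : Finset ι → ℝ)
    (hvsub : ∀ S T : Finset ι, v (S ∪ T) + v (S ∩ T) ≤ v S + v T)
    (hvmono : ∀ S T : Finset ι, S ⊆ T → v S ≤ v T)
    (S T : Finset ι) : v (S ∪ T) ≤ v S + ∑ j ∈ T, marg v S j := by
  induction T using Finset.induction_on with
  | empty => simp
  | insert a T ha ih =>
    rw [Finset.sum_insert ha]
    have h := hvsub (S ∪ T) (insert a S)
    have h1 : (S ∪ T) ∪ insert a S = S ∪ insert a T := by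
      ext x; simp only [Finset.mem_union, Finset.mem_insert]; tauto
    have h2 : v S ≤ v ((S ∪ T) ∩ insert a S) := by
      apply hvmono
      intro x hx
      simp [hx]
    rw [h1] at h
    have h3 : marg v S a = v (insert a S) - v S := rfl
    linarith

theorem aux_pick {ι : Type*} [Fintype ι] [LinearOrder ι] [Nonempty ι]
    (v : Finset ι → ℝ) (b : ι → ℝ) (S : Finset ι) (j : ι) (hj : j ∉ S) :
    marg v S j / b j ≤ marg v S (pick v b S) / b (pick v b S) := by
  have h : Sᶜ.Nonempty := ⟨j, by simpa using hj⟩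
  have hm : pick v b S ∈
      (Sᶜ.filter fun j => ∀ j' ∈ Sᶜ, marg v S j' / b j' ≤ marg v S j / b j) := by
    unfold pick
    rw [dif_pos h]
    exact Finset.min'_mem _ _
  exact (Finset.mem_filter.mp hm).2 j (by simpa using hj)

/-- `Random-TM(γ)` is a `(1 + 2/γ)`-approximation of the optimum
(Theorem 3.3). -/
theorem randomTM_approx {ι : Type*} [Fintype ι] [LinearOrder ι] [Nonempty ι]
    (v : Finset ι → ℝ) (hv0 : v (∅ : Finset ι) = 0)
    (hvmono : ∀ S T : Finset ι, S ⊆ T → v S ≤ v T)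
    (hvsub : ∀ S T : Finset ι, v (S ∪ T) + v (S ∩ T) ≤ v S + v T)
    (B : ℝ) (hB : 0 < B)
    (c : ι → ℝ) (hc : ∀ i, 0 < c i) (hcB : ∀ i, c i ≤ B)
    (γ : ℝ) (hγ0 : 0 < γ) (hγ1 : γ ≤ 1)
    (istar : ι) (histar : ∀ j : ι, v {j} ≤ v {istar})
    (k : ℕ) (hk1 : 1 ≤ k) (hk2 : k ≤ Fintype.card ι)
    (hkcond : c (agent v c k) * v (greedySet v c k) >
      γ * B * marg v (greedySet v c (k - 1)) (agent v c k)) :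
    (1 + 2 / γ) * ((γ + 1) / (γ + 2) * v (greedySet v c (k - 1)) +
        1 / (γ + 2) * v {istar}) ≥
      optVal v c B Finset.univ := by
  obtain ⟨m, rfl⟩ : ∃ m, k = m + 1 := ⟨k - 1, by omega⟩
  simp only [agent, Nat.add_sub_cancel, greedySet] at hkcond ⊢
  generalize greedySet v c m = S at hkcond ⊢
  have hpick := aux_pick v c S
  generalize pick v c S = a at hkcond hpick
  have hca := hc a
  have hmarg : ∀ j, 0 ≤ marg v S j := fun j =>
    sub_nonneg.mpr (hvmono _ _ (Finset.subset_insert _ _))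
  have hins : v (insert a S) ≤ v S + v {istar} := by
    have h := hvsub {a} S
    have h1 : ({a} : Finset ι) ∪ S = insert a S := rfl
    have h2 : v ∅ ≤ v ({a} ∩ S) := hvmono _ _ (Finset.empty_subset _)
    rw [h1] at h
    linarith [histar a]
  have hr0 : 0 ≤ marg v S a / c a := div_nonneg (hmarg a) hca.le
  have hrB : γ * (B * (marg v S a / c a)) ≤ v (insert a S) := by
    have : γ * (B * (marg v S a / c a)) = (γ * B * marg v S a) / c a := by ring
    rw [this, div_le_iff₀ hca]
    linarith
  have hL : (1 + 2 / γ) * ((γ + 1) / (γ + 2) * v S + 1 / (γ + 2) * v {istar})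
      = ((γ + 1) * v S + v {istar}) / γ := by
    have : γ + 2 ≠ 0 := by positivity
    field_simp
  rw [hL, ge_iff_le, optVal]
  apply csSup_le
  · exact ⟨v ∅, ∅, by simp [hB.le], rfl⟩
  rintro _ ⟨T, ⟨-, hT⟩, rfl⟩
  rw [le_div_iff₀ hγ0]
  have h1 := aux_marg_sum v hvsub hvmono S T
  have h2 : v T ≤ v (S ∪ T) := hvmono _ _ Finset.subset_union_right
  have h3 : ∑ j ∈ T, marg v S j ≤ ∑ j ∈ T, c j * (marg v S a / c a) := by
    apply Finset.sum_le_sum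
    intro j _
    by_cases hj : j ∈ S
    · have : marg v S j = 0 := by simp [marg, Finset.insert_eq_of_mem hj]
      rw [this]
      exact mul_nonneg (hc j).le hr0
    · have := hpick j hj
      rw [div_le_iff₀ (hc j)] at this
      linarith
  rw [← Finset.sum_mul] at h3
  have h4 := mul_le_mul_of_nonneg_right hT hr0
  have h5 : v T ≤ v S + B * (marg v S a / c a) := by linarith
  have h6 := mul_le_mul_of_nonneg_left h5 hγ0.le
  linarith
end

section
/- Let S = Greedy-TM(1/2, c), where c is the vector of true costs, and for each winner i ∈ S let p_i = sup{ β > 0 : i ∈ Greedy-TM(1/2, (β, c_{−i})) } be its threshold payment. Then Σ_{i∈S} p_i ≤ B; that is, the mechanism Greedy-TM(1/2) with threshold payments is budget feasible. -/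
open Classical

section Helpers

variable {ι : Type*} [Fintype ι] [LinearOrder ι] [Nonempty ι]

lemma hp_pick_spec (v : Finset ι → ℝ) (b : ι → ℝ) (S : Finset ι) (h : Sᶜ.Nonempty) :
    pick v b S ∉ S ∧ ∀ j, j ∉ S → marg v S j / b j ≤ marg v S (pick v b S) / b (pick v b S) := by
  have hm : pick v b S ∈
      Sᶜ.filter fun j => ∀ j' ∈ Sᶜ, marg v S j' / b j' ≤ marg v S j / b j := by
    unfold pick
    rw [dif_pos h]
    exact Finset.min'_mem _ _
  rw [Finset.mem_filter] at hm
  exact ⟨Finset.mem_compl.mp hm.1, fun j hj => hm.2 j (Finset.mem_compl.mpr hj)⟩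

lemma hp_pick_le (v : Finset ι → ℝ) (b : ι → ℝ) (S : Finset ι) (j : ι) (hj : j ∉ S)
    (hmax : ∀ j', j' ∉ S → marg v S j' / b j' ≤ marg v S j / b j) : pick v b S ≤ j := by
  have h : Sᶜ.Nonempty := ⟨j, Finset.mem_compl.mpr hj⟩
  unfold pick
  rw [dif_pos h]
  apply Finset.min'_le
  rw [Finset.mem_filter]
  exact ⟨Finset.mem_compl.mpr hj, fun j' hj' => hmax j' (Finset.mem_compl.mp hj')⟩

lemma hp_compl (S : Finset ι) (h : S.card < Fintype.card ι) : Sᶜ.Nonempty := by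
  rw [← Finset.card_pos, Finset.card_compl]; omega

lemma hp_card (v : Finset ι → ℝ) (b : ι → ℝ) (t : ℕ) (ht : t ≤ Fintype.card ι) :
    (greedySet v b t).card = t := by
  induction t with
  | zero => rfl
  | succ t ih =>
    have h := ih (by omega)
    have := (hp_pick_spec v b (greedySet v b t) (hp_compl _ (by omega))).1
    show (insert _ _ : Finset ι).card = _
    rw [Finset.card_insert_of_notMem this, h]

lemma hp_spec (v : Finset ι → ℝ) (b : ι → ℝ) (t : ℕ) (ht : t < Fintype.card ι) :
    pick v b (greedySet v b t) ∉ greedySet v b t ∧ ∀ j, j ∉ greedySet v b t →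
      marg v (greedySet v b t) j / b j ≤ marg v (greedySet v b t) (pick v b (greedySet v b t)) /
        b (pick v b (greedySet v b t)) :=
  hp_pick_spec v b _ (hp_compl _ (by rw [hp_card v b t ht.le]; exact ht))

lemma hp_mono (v : Finset ι → ℝ) (b : ι → ℝ) : Monotone (greedySet v b) :=
  monotone_nat_of_le_succ fun _ => Finset.subset_insert _ _

lemma hp_mem (v : Finset ι → ℝ) (b : ι → ℝ) (k : ℕ) (i : ι) (hi : i ∈ greedySet v b k) :
    ∃ t < k, pick v b (greedySet v b t) = i := by
  induction k with
  | zero => simp [greedySet] at hi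
  | succ k ih =>
    rw [greedySet, Finset.mem_insert] at hi
    rcases hi with hi | hi
    · exact ⟨k, by omega, hi.symm⟩
    · obtain ⟨t, ht, h⟩ := ih hi
      exact ⟨t, by omega, h⟩

lemma hp_tm (v : Finset ι → ℝ) (B γ : ℝ) (b : ι → ℝ) :
    ∃ k ≤ Fintype.card ι, greedyTM v B γ b = greedySet v b k ∧ ∀ s < k,
      b (pick v b (greedySet v b s)) * v (greedySet v b (s + 1)) ≤
        γ * B * marg v (greedySet v b s) (pick v b (greedySet v b s)) := by
  unfold greedyTM
  split_ifs with h
  · have h1 := Nat.find_spec h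
    refine ⟨Nat.find h - 1, by omega, rfl, fun s hs => ?_⟩
    have := Nat.find_min h (m := s + 1) (by omega)
    by_contra hcon
    exact this ⟨⟨by omega, by omega⟩, not_le.mp hcon⟩
  · refine ⟨Fintype.card ι, le_rfl, ?_, fun s hs => ?_⟩
    · exact ((Finset.card_eq_iff_eq_univ _).mp (hp_card v b _ le_rfl)).symm
    · by_contra hcon
      exact h ⟨s + 1, ⟨by omega, by omega⟩, not_le.mp hcon⟩

lemma hp_marg_nonneg (v : Finset ι → ℝ) (hvmono : ∀ S T : Finset ι, S ⊆ T → v S ≤ v T)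
    (S : Finset ι) (i : ι) : 0 ≤ marg v S i :=
  sub_nonneg.mpr (hvmono _ _ (Finset.subset_insert _ _))

lemma hp_marg_anti (v : Finset ι → ℝ) (hvmono : ∀ S T : Finset ι, S ⊆ T → v S ≤ v T)
    (hvsub : ∀ S T : Finset ι, v (S ∪ T) + v (S ∩ T) ≤ v S + v T)
    (S T : Finset ι) (h : S ⊆ T) (i : ι) : marg v T i ≤ marg v S i := by
  by_cases hi : i ∈ T
  · have : marg v T i = 0 := by simp [marg, Finset.insert_eq_of_mem hi]
    rw [this]; exact hp_marg_nonneg v hvmono S i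
  · have := hvsub (insert i S) T
    rw [Finset.insert_union, Finset.union_eq_right.mpr h, Finset.insert_inter_of_notMem hi,
      Finset.inter_eq_left.mpr h] at this
    unfold marg; linarith

lemma hp_sum (v : Finset ι → ℝ) (hvmono : ∀ S T : Finset ι, S ⊆ T → v S ≤ v T)
    (hvsub : ∀ S T : Finset ι, v (S ∪ T) + v (S ∩ T) ≤ v S + v T)
    (U S : Finset ι) : v (S ∪ U) ≤ v U + ∑ j ∈ S, marg v U j := by
  induction S using Finset.induction_on with
  | empty => simp
  | insert a S ha ih =>
    rw [Finset.sum_insert ha, Finset.insert_union]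
    have := hp_marg_anti v hvmono hvsub U (S ∪ U) Finset.subset_union_right a
    have e : marg v (S ∪ U) a = v (insert a (S ∪ U)) - v (S ∪ U) := rfl
    linarith

lemma hp_pick_stable (v : Finset ι → ℝ) (hvmono : ∀ S T : Finset ι, S ⊆ T → v S ≤ v T)
    (c : ι → ℝ) (hc : ∀ i, 0 < c i) (S : Finset ι) (h : Sᶜ.Nonempty) (i : ι) (β : ℝ)
    (hβ : c i ≤ β) (hne : pick v c S ≠ i) :
    pick v (Function.update c i β) S = pick v c S := by
  obtain ⟨h1, h2⟩ := hp_pick_spec v c S h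
  have hle : ∀ j, marg v S j / Function.update c i β j ≤ marg v S j / c j := by
    intro j
    by_cases hj : j = i
    · subst hj
      rw [Function.update_self]
      exact div_le_div_of_nonneg_left (hp_marg_nonneg v hvmono S j) (hc j) hβ
    · rw [Function.update_of_ne hj]
  have hu : Function.update c i β (pick v c S) = c (pick v c S) := Function.update_of_ne hne _ _
  obtain ⟨h3, h4⟩ := hp_pick_spec v (Function.update c i β) S h
  apply le_antisymm
  · apply hp_pick_le v _ S _ h1
    intro j hj
    rw [hu]
    exact (hle j).trans (h2 j hj)
  · apply hp_pick_le v c S _ h3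
    intro j hj
    have := h4 _ h1
    rw [hu] at this
    exact (h2 j hj).trans (this.trans (hle _))

lemma hp_prefix (v : Finset ι → ℝ) (hvmono : ∀ S T : Finset ι, S ⊆ T → v S ≤ v T)
    (c : ι → ℝ) (hc : ∀ i, 0 < c i) (i : ι) (β : ℝ) (hβ : c i ≤ β) (t : ℕ)
    (ht : t < Fintype.card ι) (hi : pick v c (greedySet v c t) = i) :
    ∀ s ≤ t, greedySet v (Function.update c i β) s = greedySet v c s := by
  intro s hs
  induction s with
  | zero => rfl
  | succ s ih =>
    have e := ih (by omega)
    have hne : pick v c (greedySet v c s) ≠ i := by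
      intro hcon
      have h1 : i ∉ greedySet v c t := hi ▸ (hp_spec v c t ht).1
      apply h1
      apply hp_mono v c hs
      rw [greedySet, hcon]
      exact Finset.mem_insert_self _ _
    rw [greedySet, greedySet, e, hp_pick_stable v hvmono c hc _ _ i β hβ hne]
    exact hp_compl _ (by rw [hp_card v c s (by omega)]; omega)

lemma hp_sum_greedy (v : Finset ι → ℝ) (b : ι → ℝ) (f : ι → ℝ) (k : ℕ)
    (hk : k ≤ Fintype.card ι) :
    ∑ i ∈ greedySet v b k, f i = ∑ t ∈ Finset.range k, f (pick v b (greedySet v b t)) := by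
  induction k with
  | zero => rfl
  | succ k ih =>
    rw [greedySet, Finset.sum_insert (hp_spec v b k (by omega)).1, ih (by omega),
      Finset.sum_range_succ, add_comm]

lemma hp_tele (v : Finset ι → ℝ) (hv0 : v (∅ : Finset ι) = 0) (b : ι → ℝ) (k : ℕ) :
    ∑ t ∈ Finset.range k, marg v (greedySet v b t) (pick v b (greedySet v b t))
      = v (greedySet v b k) := by
  have := Finset.sum_range_sub (fun t => v (greedySet v b t)) k
  simp only [greedySet, hv0, sub_zero] at this
  exact this

lemma hp_cost (v : Finset ι → ℝ) (hvmono : ∀ S T : Finset ι, S ⊆ T → v S ≤ v T)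
    (hvsub : ∀ S T : Finset ι, v (S ∪ T) + v (S ∩ T) ≤ v S + v T)
    (B : ℝ) (hB : 0 < B) (c : ι → ℝ) (hc : ∀ i, 0 < c i) (k : ℕ) (hk : k ≤ Fintype.card ι)
    (hcond : ∀ s < k,
      c (pick v c (greedySet v c s)) * v (greedySet v c (s + 1)) ≤
        1 / 2 * B * marg v (greedySet v c s) (pick v c (greedySet v c s)))
    (t : ℕ) (ht : t < k) :
    c (pick v c (greedySet v c t)) * v (greedySet v c k) ≤
        1 / 2 * B * marg v (greedySet v c t) (pick v c (greedySet v c t)) := by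
  obtain ⟨l, rfl⟩ : ∃ l, k = l + 1 := ⟨k - 1, by omega⟩
  have h1 := hcond l (by omega)
  by_cases htl : t = l
  · subst htl; exact h1
  have hsub : greedySet v c t ⊆ greedySet v c l := hp_mono v c (by omega)
  set j := pick v c (greedySet v c l) with hj
  set a := pick v c (greedySet v c t) with ha
  have hjn : j ∉ greedySet v c t := fun h => (hp_spec v c l (by omega)).1 (hsub h)
  have h2 := (hp_spec v c t (by omega)).2 j hjn
  rw [← ha] at h2
  have h3 := hp_marg_anti v hvmono hvsub _ _ hsub j
  rw [div_le_div_iff₀ (hc _) (hc _)] at h2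
  have h4 : marg v (greedySet v c l) j * c a ≤ marg v (greedySet v c t) a * c j :=
    (mul_le_mul_of_nonneg_right h3 (hc a).le).trans h2
  have h5 : c j * (c a * v (greedySet v c (l + 1))) ≤
      c j * (1 / 2 * B * marg v (greedySet v c t) a) := by
    have e1 := mul_le_mul_of_nonneg_left h1 (hc a).le
    have e2 := mul_le_mul_of_nonneg_left h4 (by positivity : 0 ≤ 1 / 2 * B)
    linarith
  exact le_of_mul_le_mul_left h5 (hc j)

lemma hp_main (v : Finset ι → ℝ) (hv0 : v (∅ : Finset ι) = 0)
    (hvmono : ∀ S T : Finset ι, S ⊆ T → v S ≤ v T)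
    (hvsub : ∀ S T : Finset ι, v (S ∪ T) + v (S ∩ T) ≤ v S + v T)
    (B : ℝ) (hB : 0 < B) (c : ι → ℝ) (hc : ∀ i, 0 < c i) (k : ℕ) (hk : k ≤ Fintype.card ι)
    (hcond : ∀ s < k,
      c (pick v c (greedySet v c s)) * v (greedySet v c (s + 1)) ≤
        1 / 2 * B * marg v (greedySet v c s) (pick v c (greedySet v c s)))
    (t : ℕ) (ht : t < k) (i : ι) (hi : pick v c (greedySet v c t) = i) (β : ℝ) (hβ : 0 < β)
    (hw : i ∈ greedyTM v B (1 / 2) (Function.update c i β)) :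
    β * v (greedySet v c k) ≤ B * marg v (greedySet v c t) i := by
  have hcost := hp_cost v hvmono hvsub B hB c hc k hk hcond
  have hvn : ∀ S, 0 ≤ v S := fun S => hv0 ▸ hvmono _ _ (Finset.empty_subset S)
  rcases le_or_gt β (c i) with hle | hgt
  · have h1 := hcost t ht
    rw [hi] at h1
    have h2 := mul_le_mul_of_nonneg_right hle (hvn (greedySet v c k))
    have h3 := mul_nonneg hB.le (hp_marg_nonneg v hvmono (greedySet v c t) i)
    linarith
  · set b := Function.update c i β with hb
    have hbi : b i = β := Function.update_self ..
    obtain ⟨k', hk', he, hcond'⟩ := hp_tm v B (1 / 2) b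
    rw [he] at hw
    obtain ⟨u, hu, hui⟩ := hp_mem v b k' i hw
    have hpre := hp_prefix v hvmono c hc i β hgt.le t (by omega) hi
    have hin : i ∉ greedySet v c t := hi ▸ (hp_spec v c t (by omega)).1
    have htu : t ≤ u := by
      by_contra hcon
      apply hin
      rw [← hpre t le_rfl]
      apply hp_mono v b (show u + 1 ≤ t by omega)
      rw [greedySet, hui]
      exact Finset.mem_insert_self _ _
    have hsub : greedySet v c t ⊆ greedySet v b u := by
      rw [← hpre t le_rfl]; exact hp_mono v b htu
    have hsp := (hp_spec v b u (by omega)).2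
    have hcu := hcond' u hu
    rw [greedySet] at hcu
    rw [hui] at hsp hcu
    rw [hbi] at hsp hcu
    set T := greedySet v b u with hT
    set S := greedySet v c k with hS
    have hanti := hp_marg_anti v hvmono hvsub _ _ hsub i
    have hmn := hp_marg_nonneg v hvmono T i
    set r := marg v T i / β with hr
    have hr0 : 0 ≤ r := div_nonneg hmn hβ.le
    have hrb : r * β = marg v T i := div_mul_cancel₀ _ hβ.ne'
    have hmj : ∀ j ∈ S, marg v (insert i T) j ≤ r * c j := by
      intro j _
      by_cases hj : j ∈ insert i T
      · have : marg v (insert i T) j = 0 := by simp only [marg, Finset.insert_eq_of_mem hj, sub_self]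
        rw [this]; exact mul_nonneg hr0 (hc j).le
      · rw [Finset.mem_insert, not_or] at hj
        have h1 := hsp j hj.2
        have hbj : b j = c j := Function.update_of_ne hj.1 _ _
        rw [hbj, div_le_iff₀ (hc j)] at h1
        exact (hp_marg_anti v hvmono hvsub _ _ (Finset.subset_insert i T) j).trans h1
    have hs1 := hp_sum v hvmono hvsub (insert i T) S
    have hs2 := Finset.sum_le_sum hmj
    rw [← Finset.mul_sum] at hs2
    have hs3 := hvmono S (S ∪ insert i T) Finset.subset_union_left
    -- total cost
    have hs4 : (∑ j ∈ S, c j) * v S ≤ 1 / 2 * B * v S := by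
      rw [hS, hp_sum_greedy v c c k hk, Finset.sum_mul]
      conv_rhs => rw [← hp_tele v hv0 c k, Finset.mul_sum]
      exact Finset.sum_le_sum fun s hs => hcost s (Finset.mem_range.mp hs)
    rcases (hvn S).eq_or_lt with h0 | hpos
    · rw [← h0, mul_zero]
      exact mul_nonneg hB.le (hp_marg_nonneg v hvmono _ i)
    have hs5 : ∑ j ∈ S, c j ≤ 1 / 2 * B := le_of_mul_le_mul_right hs4 hpos
    have hs6 := mul_le_mul_of_nonneg_left hs5 hr0
    have hs7 : v S - v (insert i T) ≤ r * (1 / 2 * B) := by linarith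
    have hs8 := mul_le_mul_of_nonneg_left hs7 hβ.le
    have hs9 : β * (r * (1 / 2 * B)) = 1 / 2 * B * marg v T i := by rw [← hrb]; ring
    have hs10 := mul_le_mul_of_nonneg_left hanti hB.le
    linarith

end Helpers

/-- `Greedy-TM(1/2)` with threshold payments is budget feasible
(Theorem 3.4). -/
theorem greedyTM_budget_feasible {ι : Type*} [Fintype ι] [LinearOrder ι] [Nonempty ι]
    (v : Finset ι → ℝ) (hv0 : v (∅ : Finset ι) = 0)
    (hvmono : ∀ S T : Finset ι, S ⊆ T → v S ≤ v T)
    (hvsub : ∀ S T : Finset ι, v (S ∪ T) + v (S ∩ T) ≤ v S + v T)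
    (B : ℝ) (hB : 0 < B)
    (c : ι → ℝ) (hc : ∀ i, 0 < c i) (hcB : ∀ i, c i ≤ B) :
    ∑ i ∈ greedyTM v B (1 / 2) c,
      sSup {β : ℝ | 0 < β ∧ i ∈ greedyTM v B (1 / 2) (Function.update c i β)} ≤ B := by
  have hvn : ∀ S, 0 ≤ v S := fun S => hv0 ▸ hvmono _ _ (Finset.empty_subset S)
  obtain ⟨k, hk, he, hcond⟩ := hp_tm v B (1 / 2) c
  rw [he]
  rcases (hvn (greedySet v c k)).eq_or_lt with h0 | hpos
  · rcases Nat.eq_zero_or_pos k with rfl | hkpos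
    · simpa [greedySet] using hB.le
    -- all values vanish
    have hz : ∀ S, v S = 0 := by
      have h1 : v (greedySet v c 1) ≤ 0 := h0 ▸ hvmono _ _ (hp_mono v c hkpos)
      have hm : marg v (greedySet v c 0) (pick v c (greedySet v c 0)) ≤ 0 := by
        have := hp_tele v hv0 c 1
        rw [Finset.sum_range_one] at this
        linarith
      have hsp := (hp_spec v c 0 (by omega)).2
      intro S
      apply le_antisymm _ (hvn S)
      have hs := hp_sum v hvmono hvsub ∅ S
      rw [Finset.union_empty, hv0, zero_add] at hs
      refine hs.trans (Finset.sum_nonpos fun j _ => ?_)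
      have h2 := hsp j (Finset.notMem_empty j)
      have h3 := h2.trans (div_nonpos_of_nonpos_of_nonneg hm (hc _).le)
      rw [div_le_iff₀ (hc j), zero_mul] at h3
      exact h3
    have hall : ∀ b, greedyTM v B (1 / 2) b = Finset.univ := by
      intro b
      unfold greedyTM
      rw [dif_neg]
      rintro ⟨m, _, hm⟩
      simp [marg, hz] at hm
    refine le_trans (Finset.sum_nonpos fun i _ => ?_) hB.le
    rw [Real.sSup_of_not_bddAbove]
    rintro ⟨M, hM⟩
    have := hM (show |M| + 1 ∈ _ from ⟨by positivity, by rw [hall]; exact Finset.mem_univ _⟩)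
    have := le_abs_self M
    linarith
  · rw [hp_sum_greedy v c _ k hk]
    have : ∀ t ∈ Finset.range k, sSup {β : ℝ | 0 < β ∧ pick v c (greedySet v c t) ∈
        greedyTM v B (1 / 2) (Function.update c (pick v c (greedySet v c t)) β)} ≤
        B / v (greedySet v c k) * marg v (greedySet v c t) (pick v c (greedySet v c t)) := by
      intro t ht
      apply Real.sSup_le
      · rintro β ⟨hβ, hw⟩
        have := hp_main v hv0 hvmono hvsub B hB c hc k hk hcond t (Finset.mem_range.mp ht) _ rfl
          β hβ hw
        rw [div_mul_eq_mul_div, le_div_iff₀ hpos]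
        exact this
      · exact mul_nonneg (by positivity) (hp_marg_nonneg v hvmono _ _)
    refine (Finset.sum_le_sum this).trans ?_
    rw [← Finset.mul_sum, hp_tele v hv0 c k, div_mul_cancel₀ _ hpos.ne']
end

section
/- For every fixed α ∈ (0,1] and budget B > 0, the allocation rule b ↦ Greedy-EOM(α, b) is monotone: for every bid vector b with positive entries, every agent i ∈ Greedy-EOM(α, b), and every 0 < β ≤ b_i, one has i ∈ Greedy-EOM(α, (β, b_{−i})). -/
open Classical

theorem pick_mem_aux {ι : Type*} [Fintype ι] [LinearOrder ι] [Nonempty ι]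
    (v : Finset ι → ℝ) (b : ι → ℝ) (S : Finset ι) (h : Sᶜ.Nonempty) :
    (pick v b S ∈ Sᶜ ∧ ∀ j' ∈ Sᶜ, marg v S j' / b j' ≤ marg v S (pick v b S) / b (pick v b S)) ∧
    ∀ q ∈ Sᶜ, (∀ j' ∈ Sᶜ, marg v S j' / b j' ≤ marg v S q / b q) → pick v b S ≤ q := by
  unfold pick
  rw [dif_pos h]
  constructor
  · exact Finset.mem_filter.mp (Finset.min'_mem _ _)
  · intro q hq hq'
    exact Finset.min'_le _ _ (Finset.mem_filter.mpr ⟨hq, hq'⟩)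

theorem pick_eq_aux {ι : Type*} [Fintype ι] [LinearOrder ι] [Nonempty ι]
    (v : Finset ι → ℝ)
    (hvmono : ∀ S T : Finset ι, S ⊆ T → v S ≤ v T)
    (b b' : ι → ℝ) (hb' : ∀ j, 0 < b' j) (hle : ∀ j, b' j ≤ b j)
    (S : Finset ι) (i : ι) (heq : ∀ j, j ≠ i → b' j = b j) (hS : Sᶜ.Nonempty)
    (hp : pick v b' S ≠ i) : pick v b S = pick v b' S := by
  obtain ⟨⟨h1, h2⟩, h3⟩ := pick_mem_aux v b S hS
  obtain ⟨⟨k1, k2⟩, k3⟩ := pick_mem_aux v b' S hS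
  have hr : ∀ j, marg v S j / b j ≤ marg v S j / b' j := by
    intro j
    have : 0 ≤ marg v S j := sub_nonneg.mpr (hvmono _ _ (Finset.subset_insert _ _))
    exact div_le_div_of_nonneg_left this (hb' j) (hle j)
  have he := heq _ hp
  apply le_antisymm
  · apply h3 _ k1
    intro j hj
    rw [← he]
    exact (hr j).trans (k2 j hj)
  · apply k3 _ h1
    intro j hj
    have := h2 _ k1
    rw [← he] at this
    exact (k2 j hj).trans (this.trans (hr _))

theorem greedySet_mono_aux {ι : Type*} [Fintype ι] [LinearOrder ι] [Nonempty ι]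
    (v : Finset ι → ℝ) (b : ι → ℝ) {s t : ℕ} (h : s ≤ t) : greedySet v b s ⊆ greedySet v b t := by
  induction h with
  | refl => exact Finset.Subset.refl _
  | step _ ih => exact ih.trans (Finset.subset_insert _ _)

theorem greedySet_aux {ι : Type*} [Fintype ι] [LinearOrder ι] [Nonempty ι]
    (v : Finset ι → ℝ)
    (hvmono : ∀ S T : Finset ι, S ⊆ T → v S ≤ v T)
    (b b' : ι → ℝ) (hb' : ∀ j, 0 < b' j) (hle : ∀ j, b' j ≤ b j)
    (i : ι) (heq : ∀ j, j ≠ i → b' j = b j) (t : ℕ) :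
    greedySet v b' t = greedySet v b t ∨
      ∃ s ≤ t, i ∈ greedySet v b' s ∧ greedySet v b' s ⊆ insert i (greedySet v b t) := by
  induction t with
  | zero => left; rfl
  | succ t ih =>
    have hsub : insert i (greedySet v b t) ⊆ insert i (greedySet v b (t+1)) :=
      Finset.insert_subset_insert _ (greedySet_mono_aux v b (Nat.le_succ t))
    rcases ih with ih | ⟨s, hs, h1, h2⟩
    · by_cases hi : i ∈ greedySet v b t
      · right
        refine ⟨t, Nat.le_succ t, ih ▸ hi, ?_⟩
        rw [ih]
        exact (Finset.subset_insert _ _).trans hsub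
      · have hS : (greedySet v b t)ᶜ.Nonempty := ⟨i, Finset.mem_compl.mpr hi⟩
        by_cases hp : pick v b' (greedySet v b t) = i
        · right
          have : greedySet v b' (t+1) = insert i (greedySet v b t) := by
            simp only [greedySet]
            rw [ih, hp]
          exact ⟨t+1, le_rfl, by rw [this]; exact Finset.mem_insert_self _ _, by rw [this]; exact hsub⟩
        · left
          have := pick_eq_aux v hvmono b b' hb' hle _ i heq hS hp
          simp only [greedySet]
          rw [ih, this]
    · right
      exact ⟨s, hs.trans (Nat.le_succ t), h1, h2.trans hsub⟩

theorem optVal_aux {ι : Type*} [Fintype ι] (v : Finset ι → ℝ) (b b' : ι → ℝ) (B : ℝ) (hB : 0 < B)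
    (hle : ∀ j, b' j ≤ b j) (A : Finset ι) : optVal v b B A ≤ optVal v b' B A := by
  unfold optVal
  apply csSup_le_csSup (Set.toFinite _).bddAbove
  · exact ⟨v ∅, ∅, ⟨by simp, by simpa using hB.le⟩, rfl⟩
  · apply Set.image_mono
    rintro S ⟨h1, h2⟩
    exact ⟨h1, (Finset.sum_le_sum fun j _ => hle j).trans h2⟩

/-- For every fixed `α ∈ (0,1]` and budget `B > 0`, the allocation rule
`b ↦ Greedy-EOM(α, b)` is monotone (part of Lemma 4.1). -/
theorem greedyEOM_monotone {ι : Type*} [Fintype ι] [LinearOrder ι] [Nonempty ι]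
    (v : Finset ι → ℝ) (hv0 : v (∅ : Finset ι) = 0)
    (hvmono : ∀ S T : Finset ι, S ⊆ T → v S ≤ v T)
    (hvsub : ∀ S T : Finset ι, v (S ∪ T) + v (S ∩ T) ≤ v S + v T)
    (B : ℝ) (hB : 0 < B) (α : ℝ) (hα0 : 0 < α) (hα1 : α ≤ 1) :
    MonotoneAlloc (fun b => greedyEOM v B α b) := by
  intro b hb i hi β hβ hβi
  set b' := Function.update b i β with hb'def
  have heq : ∀ j, j ≠ i → b' j = b j := fun j hj => Function.update_of_ne hj _ _
  have hbi : b' i = β := Function.update_self _ _ _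
  have hb' : ∀ j, 0 < b' j := by
    intro j
    by_cases hj : j = i
    · rw [hj, hbi]; exact hβ
    · rw [heq j hj]; exact hb j
  have hle : ∀ j, b' j ≤ b j := by
    intro j
    by_cases hj : j = i
    · rw [hj, hbi]; exact hβi
    · exact (heq j hj).le
  have hopt := mul_le_mul_of_nonneg_left (optVal_aux v b b' B hB hle Finset.univ) hα0.le
  -- a winning prefix at `b` of small value
  have key : ∀ t, i ∈ greedySet v b t →
      v (greedySet v b t) ≤ α * optVal v b B Finset.univ → i ∈ greedyEOM v B α b' := by
    intro t hit hvt
    have hs : ∃ s, i ∈ greedySet v b' s ∧ greedySet v b' s ⊆ greedySet v b t := by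
      rcases greedySet_aux v hvmono b b' hb' hle i heq t with h | ⟨s, _, h1, h2⟩
      · exact ⟨t, by rw [h]; exact hit, by rw [h]⟩
      · exact ⟨s, h1, by rwa [Finset.insert_eq_of_mem hit] at h2⟩
    obtain ⟨s, h1, h2⟩ := hs
    unfold greedyEOM
    split_ifs with h
    · have hf := (Nat.find_spec h).2
      have hlt : s < Nat.find h := by
        by_contra hcon
        have := hvmono _ _ ((greedySet_mono_aux v b' (not_lt.mp hcon)).trans h2)
        linarith
      exact greedySet_mono_aux v b' (by omega) h1
    · exact Finset.mem_univ _
  change i ∈ greedyEOM v B α b at hi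
  change i ∈ greedyEOM v B α b'
  unfold greedyEOM at hi
  split_ifs at hi with h
  · refine key _ hi ?_
    obtain ⟨⟨hk1, hk2⟩, _⟩ := Nat.find_spec h
    have hk : 1 ≤ Nat.find h - 1 := by
      by_contra hcon
      have h0 : Nat.find h - 1 = 0 := by omega
      rw [h0] at hi
      simp [greedySet] at hi
    have hmin := Nat.find_min h (m := Nat.find h - 1) (by omega)
    by_contra hcon
    exact hmin ⟨⟨hk, by omega⟩, not_le.mp hcon⟩
  · have hcard : ∀ t, t ≤ (greedySet v b t).card ∨ greedySet v b t = Finset.univ := by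
      intro t
      induction t with
      | zero => left; simp
      | succ t ih =>
        by_cases hS : (greedySet v b t)ᶜ.Nonempty
        · have hp := (pick_mem_aux v b _ hS).1.1
          rw [Finset.mem_compl] at hp
          rcases ih with ih | ih
          · left
            simp only [greedySet]
            rw [Finset.card_insert_of_notMem hp]
            omega
          · rw [ih] at hp; simp at hp
        · right
          rw [Finset.not_nonempty_iff_eq_empty, Finset.compl_eq_empty_iff] at hS
          exact Finset.univ_subset_iff.mp (hS ▸ greedySet_mono_aux v b (Nat.le_succ t))
    have huniv : greedySet v b (Fintype.card ι) = Finset.univ := by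
      rcases hcard (Fintype.card ι) with h | h
      · exact (Finset.card_eq_iff_eq_univ _).mp (le_antisymm (Finset.card_le_univ _) h)
      · exact h
    refine key (Fintype.card ι) (by rw [huniv]; exact Finset.mem_univ _) ?_
    by_contra hcon
    exact h ⟨Fintype.card ι, ⟨Fintype.card_pos, le_rfl⟩, not_le.mp hcon⟩
end

section
/- Let v be a monotone submodular valuation on subsets of A with v(∅) = 0, and let b assign a positive cost b_t to each agent t. Let S'' ⊆ S' ⊆ A, let T ⊆ A, and let i ∈ A with m_i(S'') > 0. Suppose that for every t ∈ T ∖ S' one has b_t · m_i(S'') ≥ b_i · m_t(S''). Then Σ_{t ∈ T ∖ S'} b_t ≥ (b_i / m_i(S'')) · (v(T) − v(S')). (This is the charging inequality used in all the budget feasibility proofs of the paper: Theorem 3.4 and Lemmas 4.3, 4.7 and 5.3.) -/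
open Classical

/-- the charging inequality used in all budget feasibility proofs. -/
theorem charging_inequality {ι : Type*} [Fintype ι] [DecidableEq ι]
    (v : Finset ι → ℝ) (hv0 : v (∅ : Finset ι) = 0)
    (hvmono : ∀ S T : Finset ι, S ⊆ T → v S ≤ v T)
    (hvsub : ∀ S T : Finset ι, v (S ∪ T) + v (S ∩ T) ≤ v S + v T)
    (b : ι → ℝ) (hb : ∀ t, 0 < b t)
    (S'' S' T : Finset ι) (hS : S'' ⊆ S') (i : ι)
    (hmi : 0 < marg v S'' i)
    (hcharge : ∀ t ∈ T \ S', b i * marg v S'' t ≤ b t * marg v S'' i) :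
    (b i / marg v S'' i) * (v T - v S') ≤ ∑ t ∈ T \ S', b t := by
  have key : ∀ U : Finset ι, v (S' ∪ U) - v S' ≤ ∑ t ∈ U, marg v S'' t := by
    intro U
    induction U using Finset.induction_on with
    | empty => simp
    | insert t U ht ih =>
      rw [Finset.sum_insert ht]
      have h1 := hvsub (S' ∪ U) (insert t S'')
      have h2 : (S' ∪ U) ∪ insert t S'' = S' ∪ insert t U := by
        ext x
        have := @hS x
        simp only [Finset.mem_union, Finset.mem_insert]
        tauto
      have h3 : v S'' ≤ v ((S' ∪ U) ∩ insert t S'') := by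
        apply hvmono
        intro x hx
        have := hS hx
        simp only [Finset.mem_inter, Finset.mem_union, Finset.mem_insert]
        tauto
      rw [h2] at h1
      unfold marg at ih ⊢
      linarith
  have h1 := key (T \ S')
  have h2 : v T ≤ v (S' ∪ T \ S') := by
    apply hvmono
    rw [Finset.union_sdiff_self_eq_union]
    exact Finset.subset_union_right
  have h3 : v T - v S' ≤ ∑ t ∈ T \ S', marg v S'' t := by linarith
  have h4 : b i * ∑ t ∈ T \ S', marg v S'' t ≤ (∑ t ∈ T \ S', b t) * marg v S'' i := by
    rw [Finset.mul_sum, Finset.sum_mul]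
    exact Finset.sum_le_sum hcharge
  rw [div_mul_eq_mul_div, div_le_iff₀ hmi]
  exact (mul_le_mul_of_nonneg_left h3 (hb i).le).trans h4
end

section
/- Let β = (√17 − 3)/4 and let S = Greedy-EOM(1/2, c) for the true costs c. If v({i*}) ≥ β · opt(A ∖ {i*}, B), then (1 + 1/β) · v({i*}) ≥ opt(A, B); otherwise, (1 + 1/β) · v(S) ≥ opt(A, B). Since 1 + 1/β = 2/(1 − 2β) = (5 + √17)/2 ≈ 4.56, the deterministic mechanism Deterministic-EOM (which outputs {i*} in the first case and Greedy-EOM(1/2, c) in the second) is a 4.56-approximation of the optimum. -/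
open Classical

lemma optVal_bdd {ι : Type*} [Fintype ι] (v : Finset ι → ℝ) (c : ι → ℝ) (B : ℝ) (A' : Finset ι) :
    BddAbove (v '' {S : Finset ι | S ⊆ A' ∧ ∑ i ∈ S, c i ≤ B}) :=
  ((Set.toFinite _).image v).bddAbove

lemma le_optVal {ι : Type*} [Fintype ι] (v : Finset ι → ℝ) (c : ι → ℝ) (B : ℝ) (A' S : Finset ι)
    (h : S ⊆ A') (h2 : ∑ i ∈ S, c i ≤ B) : v S ≤ optVal v c B A' :=
  le_csSup (optVal_bdd v c B A') ⟨S, ⟨h, h2⟩, rfl⟩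

lemma optVal_le {ι : Type*} (v : Finset ι → ℝ) (c : ι → ℝ) (B : ℝ) (hB : 0 < B)
    (A' : Finset ι) (x : ℝ)
    (h : ∀ S, S ⊆ A' → ∑ i ∈ S, c i ≤ B → v S ≤ x) : optVal v c B A' ≤ x := by
  apply csSup_le
  · exact ⟨v ∅, ∅, ⟨Finset.empty_subset _, by simpa using hB.le⟩, rfl⟩
  · rintro _ ⟨S, ⟨h1, h2⟩, rfl⟩
    exact h S h1 h2

/-- the `Deterministic-EOM` mechanism is a
`1 + 1/β = (5 + √17)/2 ≈ 4.56` approximation of the optimum, where `β = (√17 - 3)/4`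
(Theorem 4.5). -/
theorem deterministicEOM_approx {ι : Type*} [Fintype ι] [LinearOrder ι] [Nonempty ι]
    (v : Finset ι → ℝ) (hv0 : v (∅ : Finset ι) = 0)
    (hvmono : ∀ S T : Finset ι, S ⊆ T → v S ≤ v T)
    (hvsub : ∀ S T : Finset ι, v (S ∪ T) + v (S ∩ T) ≤ v S + v T)
    (B : ℝ) (hB : 0 < B)
    (c : ι → ℝ) (hc : ∀ i, 0 < c i) (hcB : ∀ i, c i ≤ B)
    (istar : ι) (histar : ∀ j : ι, v {j} ≤ v {istar}) :
    (v {istar} ≥ (Real.sqrt 17 - 3) / 4 * optVal v c B (Finset.univ.erase istar) →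
      (1 + 1 / ((Real.sqrt 17 - 3) / 4)) * v {istar} ≥ optVal v c B Finset.univ) ∧
    (¬ (v {istar} ≥ (Real.sqrt 17 - 3) / 4 * optVal v c B (Finset.univ.erase istar)) →
      (1 + 1 / ((Real.sqrt 17 - 3) / 4)) * v (greedyEOM v B (1 / 2) c) ≥
        optVal v c B Finset.univ) := by
  have hins : ∀ (a : ι) (S : Finset ι), v (insert a S) ≤ v {a} + v S := by
    intro a S
    have h1 := hvsub {a} S
    have h2 := hvmono ∅ ({a} ∩ S) (Finset.empty_subset _)
    have h3 : insert a S = {a} ∪ S := Finset.insert_eq a S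
    rw [h3]
    linarith
  have hs : Real.sqrt 17 ^ 2 = 17 := Real.sq_sqrt (by norm_num)
  have hs4 : 4 < Real.sqrt 17 := Real.lt_sqrt_of_sq_lt (by norm_num)
  have hs5 : Real.sqrt 17 < 5 := by nlinarith
  have hK : 1 + 1 / ((Real.sqrt 17 - 3) / 4) = (5 + Real.sqrt 17) / 2 := by
    have : Real.sqrt 17 - 3 ≠ 0 := by linarith
    field_simp
    nlinarith
  rw [hK]
  set s := Real.sqrt 17
  have hOm : optVal v c B (Finset.univ.erase istar) ≤ optVal v c B Finset.univ :=
    optVal_le v c B hB _ _ fun S _ h2 => le_optVal v c B _ S (Finset.subset_univ _) h2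
  have hO0 : 0 ≤ optVal v c B Finset.univ := by
    rw [← hv0]
    exact le_optVal v c B _ ∅ (Finset.empty_subset _) (by simpa using hB.le)
  constructor
  · intro h
    have h1 : optVal v c B Finset.univ
        ≤ v {istar} + optVal v c B (Finset.univ.erase istar) := by
      apply optVal_le v c B hB
      intro S _ h2
      have h3 : v S ≤ v (insert istar (S.erase istar)) :=
        hvmono _ _ (Finset.insert_erase_subset istar S)
      have h4 := hins istar (S.erase istar)
      have h5 : v (S.erase istar) ≤ optVal v c B (Finset.univ.erase istar) := by
        apply le_optVal
        · exact Finset.erase_subset_erase _ (Finset.subset_univ _)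
        · exact (Finset.sum_le_sum_of_subset_of_nonneg (Finset.erase_subset _ _)
            fun i _ _ => (hc i).le).trans h2
      linarith
    nlinarith
  · intro h
    push Not at h
    unfold greedyEOM
    split_ifs with hk
    · obtain ⟨⟨h1, _⟩, h2⟩ := Nat.find_spec hk
      obtain ⟨m, hm⟩ : ∃ m, Nat.find hk = m + 1 := ⟨Nat.find hk - 1, by omega⟩
      rw [hm] at h2 ⊢
      simp only [Nat.add_sub_cancel]
      have h3 := hins (pick v c (greedySet v c m)) (greedySet v c m)
      have h4 := histar (pick v c (greedySet v c m))
      have h5 : greedySet v c (m + 1)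
        = insert (pick v c (greedySet v c m)) (greedySet v c m) := rfl
      rw [h5] at h2
      nlinarith
    · have h1 : optVal v c B Finset.univ ≤ v Finset.univ :=
        optVal_le v c B hB _ _ fun S _ _ => hvmono _ _ (Finset.subset_univ _)
      nlinarith
end

section
/- Let r ≥ 1 and α ∈ (0,1], and suppose the oracle O satisfies O(c, A') ≤ opt(A', B) ≤ r · O(c, A') for every A' ⊆ A (an r-approximation oracle). Let S = Greedy-OM(α, c) with respect to the true costs c, suppose S ≠ A, and let k be the largest index such that S_{k−1} ⊆ S (so a_k ∉ S). Then (r/α) · v(S_{k−1}) + (1 + r/α) · v({i*}) ≥ opt(A, B). -/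
open Classical

theorem pick_not_mem_aux {ι : Type*} [Fintype ι] [LinearOrder ι] [Nonempty ι]
    (v : Finset ι → ℝ) (b : ι → ℝ) (S : Finset ι) (h : Sᶜ.Nonempty) : pick v b S ∉ S := by
  unfold pick
  rw [dif_pos h]
  have h1 := Finset.min'_mem
    (Sᶜ.filter fun j => ∀ j' ∈ Sᶜ, marg v S j' / b j' ≤ marg v S j / b j)
      (by
        obtain ⟨j, hj, hmax⟩ := Finset.exists_max_image Sᶜ (fun j => marg v S j / b j) h
        exact ⟨j, Finset.mem_filter.mpr ⟨hj, hmax⟩⟩)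
  exact Finset.mem_compl.mp (Finset.mem_filter.mp h1).1

theorem greedySet_card_aux {ι : Type*} [Fintype ι] [LinearOrder ι] [Nonempty ι]
    (v : Finset ι → ℝ) (b : ι → ℝ) (t : ℕ) (ht : t ≤ Fintype.card ι) :
    t ≤ (greedySet v b t).card := by
  induction t with
  | zero => simp
  | succ t ih =>
    have ih' := ih (by omega)
    show t + 1 ≤ (insert (pick v b (greedySet v b t)) (greedySet v b t)).card
    by_cases h : (greedySet v b t)ᶜ.Nonempty
    · rw [Finset.card_insert_of_notMem (pick_not_mem_aux v b _ h)]
      omega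
    · have : greedySet v b t = Finset.univ := by
        simpa using h
      rw [this]
      simpa using ht

/-- the approximation inequality for `Greedy-OM(α)` with an `r`-approximation
oracle (part of Lemma 4.6). -/
theorem greedyOM_approx {ι : Type*} [Fintype ι] [LinearOrder ι] [Nonempty ι]
    (v : Finset ι → ℝ) (hv0 : v (∅ : Finset ι) = 0)
    (hvmono : ∀ S T : Finset ι, S ⊆ T → v S ≤ v T)
    (hvsub : ∀ S T : Finset ι, v (S ∪ T) + v (S ∩ T) ≤ v S + v T)
    (B : ℝ) (hB : 0 < B)
    (c : ι → ℝ) (hc : ∀ i, 0 < c i) (hcB : ∀ i, c i ≤ B)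
    (r : ℝ) (hr : 1 ≤ r) (α : ℝ) (hα0 : 0 < α) (hα1 : α ≤ 1)
    (O : (ι → ℝ) → Finset ι → ℝ)
    (hO : ∀ A' : Finset ι, O c A' ≤ optVal v c B A' ∧ optVal v c B A' ≤ r * O c A')
    (istar : ι) (histar : ∀ j : ι, v {j} ≤ v {istar})
    (hSne : greedyOM v O α c ≠ Finset.univ)
    (k : ℕ) (hk1 : 1 ≤ k) (hk2 : k ≤ Fintype.card ι)
    (hksub : greedySet v c (k - 1) ⊆ greedyOM v O α c)
    (hkmax : ∀ k', 1 ≤ k' → k' ≤ Fintype.card ι →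
      greedySet v c (k' - 1) ⊆ greedyOM v O α c → k' ≤ k) :
    (r / α) * v (greedySet v c (k - 1)) + (1 + r / α) * v {istar} ≥
      optVal v c B Finset.univ := by
  have hS : greedySet v c k =
      insert (agent v c k) (greedySet v c (k - 1)) := by
    obtain ⟨m, rfl⟩ : ∃ m, k = m + 1 := ⟨k - 1, by omega⟩
    rfl
  have hnot : agent v c k ∉ greedyOM v O α c := by
    intro hmem
    have hsub : greedySet v c k ⊆ greedyOM v O α c := by
      rw [hS]
      exact Finset.insert_subset hmem hksub
    by_cases hkn : k + 1 ≤ Fintype.card ι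
    · have := hkmax (k + 1) (by omega) hkn (by simpa using hsub)
      omega
    · apply hSne
      have h1 := greedySet_card_aux v c k hk2
      have h2 : greedySet v c k = Finset.univ := by
        apply Finset.eq_univ_of_card
        have := Finset.card_le_univ (greedySet v c k)
        omega
      rw [h2] at hsub
      exact Finset.univ_subset_iff.mp hsub
  have hgt : α * O c (Finset.univ.erase (agent v c k)) < v (greedySet v c k) := by
    by_contra hle
    apply hnot
    unfold greedyOM
    exact Finset.mem_image.mpr ⟨k, Finset.mem_filter.mpr
      ⟨Finset.mem_Icc.mpr ⟨hk1, hk2⟩, not_lt.mp hle⟩, rfl⟩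
  have hins : ∀ (i : ι) (T : Finset ι), v (insert i T) ≤ v T + v {i} := by
    intro i T
    have h1 := hvsub {i} T
    have h2 := hvmono ∅ ({i} ∩ T) (Finset.empty_subset _)
    rw [← Finset.insert_eq] at h1
    linarith
  have hopt : optVal v c B Finset.univ ≤
      optVal v c B (Finset.univ.erase (agent v c k)) + v {istar} := by
    conv_lhs => unfold optVal
    apply csSup_le
    · exact ⟨v ∅, ∅, ⟨Finset.empty_subset _, by simpa using hB.le⟩, rfl⟩
    · rintro _ ⟨T, ⟨-, hT⟩, rfl⟩
      have h1 : v (T.erase (agent v c k)) ≤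
          optVal v c B (Finset.univ.erase (agent v c k)) := by
        unfold optVal
        apply le_csSup (Set.toFinite _).bddAbove
        refine ⟨_, ⟨Finset.erase_subset_erase _ (Finset.subset_univ _), ?_⟩, rfl⟩
        exact (Finset.sum_le_sum_of_subset_of_nonneg (Finset.erase_subset _ _)
          (fun i _ _ => (hc i).le)).trans hT
      have h2 := hins (agent v c k) (T.erase (agent v c k))
      have h3 : v T ≤ v (insert (agent v c k) (T.erase (agent v c k))) :=
        hvmono _ _ (Finset.insert_erase_subset _ _)
      have h4 := histar (agent v c k)
      linarith
  have h5 := (hO (Finset.univ.erase (agent v c k))).2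
  have h6 := hins (agent v c k) (greedySet v c (k - 1))
  rw [← hS] at h6
  have h7 := histar (agent v c k)
  have hra : 0 < r / α := by positivity
  have h8 : r * O c (Finset.univ.erase (agent v c k)) =
      (r / α) * (α * O c (Finset.univ.erase (agent v c k))) := by
    field_simp
  have h9 : (r / α) * (α * O c (Finset.univ.erase (agent v c k))) ≤
      (r / α) * (v (greedySet v c (k - 1)) + v {istar}) :=
    mul_le_mul_of_nonneg_left (by linarith) hra.le
  linarith
end
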